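/- arXiv:2411.14305 — 9 statements merged into one kernel-verified Lean document; each statement's English description precedes it below -/
import Mathlib

section
/- Under the constraint system together with the bounded-covariance assumption, the squared distance between the two empirical means satisfies ‖μ − μ*‖² ≤ 8ε/(1 − 2ε). -/
open Finset MeasureTheory
open scoped BigOperators InnerProductSpace

/-- If `c` averages to zero, has second moment at most `4 * D`, and equals `D` off the support of
the indicator `r`, whose mean is at most `p < 1`, then `D` is at most `4 * p / (1 - p)`. -/
theorem le_of_sum_eq_zero_of_eq_off_support {ι : Type*} [Fintype ι] [Nonempty ι]
    {c r : ι → ℝ} {D p : ℝ} (hD : 0 ≤ D) (hp0 : 0 ≤ p) (hp : p < 1)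
    (hc : ∑ i, c i = 0) (hc2 : ∑ i, c i ^ 2 ≤ 4 * Fintype.card ι * D)
    (hr : ∀ i, r i ^ 2 = r i) (hrsum : ∑ i, r i ≤ p * Fintype.card ι)
    (hrc : ∀ i, r i * (D - c i) = D - c i) :
    D ≤ 4 * p / (1 - p) := by
  have hN : (0 : ℝ) < Fintype.card ι := by exact_mod_cast Fintype.card_pos
  set N : ℝ := (Fintype.card ι : ℝ) with hNdef
  have hfirst : ∑ i, (D - c i) = N * D := by simp [Finset.sum_sub_distrib, hc, hNdef]
  have hsecond : ∑ i, (D - c i) ^ 2 ≤ N * (D ^ 2 + 4 * D) := by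
    have hexpand : ∑ i, (D - c i) ^ 2 = N * D ^ 2 - 2 * D * ∑ i, c i + ∑ i, c i ^ 2 := by
      simp [sub_sq, Finset.sum_add_distrib, Finset.sum_sub_distrib, Finset.mul_sum, hNdef]
    rw [hexpand, hc]
    linarith
  have hcs := Finset.sum_mul_sq_le_sq_mul_sq Finset.univ r (fun i => D - c i)
  simp only [hrc, hr, hfirst] at hcs
  have hbound : (N * D) ^ 2 ≤ p * N * (N * (D ^ 2 + 4 * D)) :=
    hcs.trans (mul_le_mul hrsum hsecond (Finset.sum_nonneg fun i _ => sq_nonneg _) (by positivity))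
  have hquad : D ^ 2 ≤ p * (D ^ 2 + 4 * D) := by
    refine le_of_mul_le_mul_left ?_ (pow_pos hN 2)
    linarith
  rcases hD.eq_or_lt with rfl | hDpos
  · exact div_nonneg (by positivity) (by linarith)
  · rw [le_div_iff₀ (by linarith)]
    refine le_of_mul_le_mul_left ?_ hDpos
    linarith

/-- The deviations of a finite family from its mean sum to zero along every direction. -/
theorem sum_inner_sub_mean_eq_zero {E : Type*} [NormedAddCommGroup E] [InnerProductSpace ℝ E]
    {n : ℕ} (hn : n ≠ 0) (x : Fin n → E) (v : E) :
    ∑ i, ⟪x i - (1 / (n : ℝ)) • ∑ j, x j, v⟫_ℝ = 0 := by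
  have hn' : (n : ℝ) ≠ 0 := by exact_mod_cast hn
  rw [← sum_inner, Finset.sum_sub_distrib, Finset.sum_const, Finset.card_univ, Fintype.card_fin,
    ← Nat.cast_smul_eq_nsmul ℝ, smul_smul, mul_one_div_cancel hn', one_smul, sub_self,
    inner_zero_left]

/-- Deterministic core of Theorem 1.1: under the SoS constraint system with the
bounded-covariance assumption, `‖μ − μ*‖² ≤ 8ε/(1 − 2ε)`. -/
theorem bounded_covariance_identifiability
    (n d : ℕ) (hn : 1 ≤ n) (hd : 1 ≤ d)
    (ε : ℝ) (hε0 : 0 ≤ ε) (hε : ε < 1 / 2)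
    (z x xs : Fin n → EuclideanSpace ℝ (Fin d)) (w ws : Fin n → ℝ)
    (hw : ∀ i, w i ^ 2 = w i)
    (hwz : ∀ i, w i • (z i - x i) = 0)
    (hws : ∀ i, ws i ^ 2 = ws i)
    (hwsz : ∀ i, ws i • (z i - xs i) = 0)
    (hwsum : 1 - ε ≤ (1 / (n : ℝ)) * ∑ i, w i)
    (hwssum : 1 - ε ≤ (1 / (n : ℝ)) * ∑ i, ws i)
    (μ μs : EuclideanSpace ℝ (Fin d))
    (hμ : μ = (1 / (n : ℝ)) • ∑ i, x i)
    (hμs : μs = (1 / (n : ℝ)) • ∑ i, xs i)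
    (hcov : ∀ v : EuclideanSpace ℝ (Fin d),
      (1 / (n : ℝ)) * ∑ i, ⟪x i - μ, v⟫_ℝ ^ 2 ≤ ‖v‖ ^ 2)
    (hcovs : ∀ v : EuclideanSpace ℝ (Fin d),
      (1 / (n : ℝ)) * ∑ i, ⟪xs i - μs, v⟫_ℝ ^ 2 ≤ ‖v‖ ^ 2) :
    ‖μ - μs‖ ^ 2 ≤ 8 * ε / (1 - 2 * ε) := by
  have hn0 : n ≠ 0 := by omega
  have hnpos : (0 : ℝ) < n := by exact_mod_cast hn
  have : Nonempty (Fin n) := ⟨⟨0, hn⟩⟩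
  set v := μ - μs with hv
  have hcov_v := hcov v
  have hcovs_v := hcovs v
  rw [one_div_mul_eq_div, div_le_iff₀ hnpos] at hcov_v hcovs_v
  rw [one_div_mul_eq_div, le_div_iff₀ hnpos] at hwsum hwssum
  have hmain := le_of_sum_eq_zero_of_eq_off_support (D := ‖v‖ ^ 2) (p := 2 * ε)
    (c := fun i => ⟪xs i - μs, v⟫_ℝ - ⟪x i - μ, v⟫_ℝ) (r := fun i => 1 - w i * ws i)
    (sq_nonneg _) (by linarith) (by linarith) ?_ ?_ ?_ ?_ ?_
  · convert hmain using 2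
    ring
  · rw [Finset.sum_sub_distrib, hμ, hμs, sum_inner_sub_mean_eq_zero hn0,
      sum_inner_sub_mean_eq_zero hn0, sub_zero]
  · calc ∑ i, (⟪xs i - μs, v⟫_ℝ - ⟪x i - μ, v⟫_ℝ) ^ 2
        ≤ ∑ i, (2 * ⟪xs i - μs, v⟫_ℝ ^ 2 + 2 * ⟪x i - μ, v⟫_ℝ ^ 2) :=
          Finset.sum_le_sum fun i _ => by
            linarith [sq_nonneg (⟪xs i - μs, v⟫_ℝ + ⟪x i - μ, v⟫_ℝ)]
      _ ≤ 4 * Fintype.card (Fin n) * ‖v‖ ^ 2 := by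
          rw [Finset.sum_add_distrib, ← Finset.mul_sum, ← Finset.mul_sum, Fintype.card_fin]
          linarith
  · intro i
    have hprod : (w i * ws i) ^ 2 = w i * ws i := by rw [mul_pow, hw, hws]
    linarith
  · calc ∑ i, (1 - w i * ws i) ≤ ∑ i, ((1 - w i) + (1 - ws i)) :=
          Finset.sum_le_sum fun i _ => by
            have hwi : 0 ≤ 1 - w i := by nlinarith [hw i, sq_nonneg (1 - w i)]
            have hwsi : 0 ≤ 1 - ws i := by nlinarith [hws i, sq_nonneg (1 - ws i)]
            linarith [mul_nonneg hwi hwsi]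
      _ ≤ 2 * ε * Fintype.card (Fin n) := by
          simp only [Finset.sum_add_distrib, Finset.sum_sub_distrib, Finset.sum_const,
            Finset.card_univ, Fintype.card_fin, nsmul_eq_mul, mul_one]
          linarith
  · intro i
    have hagree : (w i * ws i) • (xs i - x i) = 0 := by
      have hsplit : (w i * ws i) • (xs i - x i)
          = ws i • w i • (z i - x i) - w i • ws i • (z i - xs i) := by module
      rw [hsplit, hwz, hwsz, smul_zero, smul_zero, sub_zero]
    have hdiff : ‖v‖ ^ 2 - (⟪xs i - μs, v⟫_ℝ - ⟪x i - μ, v⟫_ℝ) = -⟪xs i - x i, v⟫_ℝ := by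
      rw [← real_inner_self_eq_norm_sq, ← inner_sub_left, ← inner_sub_left, ← inner_neg_left]
      congr 1
      rw [hv]
      abel
    have hzero : w i * ws i * ⟪xs i - x i, v⟫_ℝ = 0 := by
      rw [← real_inner_smul_left, hagree, inner_zero_left]
    simp only [hdiff]
    linarith
end

section
/- Under the constraint system together with the bounded k-th moment assumption, with δ = 1 − 2ε, the squared distance between the two empirical means satisfies ‖μ − μ*‖² ≤ 4k/δ^{2/k}; equivalently, ‖μ − μ*‖^k ≤ 2^k · k^{k/2} / δ. -/
open Finset MeasureTheory
open scoped BigOperators InnerProductSpace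

/-- If `z` agrees with `x` where `w = 1` and with `y` where `w' = 1`, then `w + w' - 1` times the
even power `⟪a - b, v⟫ ^ k` is controlled by the deviations of `x` from `a` and of `y` from `b`. -/
lemma overlap_mul_inner_pow_le {E : Type*} [NormedAddCommGroup E] [InnerProductSpace ℝ E]
    {k : ℕ} (hk : Even k) {w w' : ℝ} {z x y : E} (hw : w ^ 2 = w) (hwz : w • (z - x) = 0)
    (hw' : w' ^ 2 = w') (hwz' : w' • (z - y) = 0) (a b v : E) :
    (w + w' - 1) * ⟪a - b, v⟫_ℝ ^ k ≤
      2 ^ (k - 1) * (⟪x - a, v⟫_ℝ ^ k + ⟪y - b, v⟫_ℝ ^ k) := by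
  have hrhs : 0 ≤ (2 : ℝ) ^ (k - 1) * (⟪x - a, v⟫_ℝ ^ k + ⟪y - b, v⟫_ℝ ^ k) :=
    mul_nonneg (by positivity) (add_nonneg (hk.pow_nonneg _) (hk.pow_nonneg _))
  have hlhs : 0 ≤ ⟪a - b, v⟫_ℝ ^ k := hk.pow_nonneg _
  have zero_or_one {t : ℝ} (ht : t ^ 2 = t) : t = 0 ∨ t = 1 := by
    have : t * (t - 1) = 0 := by linear_combination ht
    rcases mul_eq_zero.mp this with h | h
    · exact Or.inl h
    · exact Or.inr (by linarith)
  rcases zero_or_one hw with rfl | rfl <;> rcases zero_or_one hw' with rfl | rfl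
  · linarith
  · linarith
  · linarith
  · have hzx : z = x := by simpa [sub_eq_zero] using hwz
    have hzy : z = y := by simpa [sub_eq_zero] using hwz'
    subst hzx hzy
    have hsplit : ⟪a - b, v⟫_ℝ = -⟪z - a, v⟫_ℝ + ⟪z - b, v⟫_ℝ := by
      simp only [inner_sub_left]; ring
    have hpow := hk.add_pow_le (a := -⟪z - a, v⟫_ℝ) (b := ⟪z - b, v⟫_ℝ)
    rw [← hsplit, hk.neg_pow] at hpow
    linarith

/-- Deterministic core of Theorem 1.4: under the SoS constraint system with certifiably
bounded `k`-th moments, with `δ = 1 − 2ε`, one has `‖μ − μ*‖² ≤ 4k/δ^(2/k)`, equivalently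
`‖μ − μ*‖^k ≤ 2^k · k^(k/2) / δ`. -/
theorem bounded_kth_moment_identifiability
    (n d k : ℕ) (hn : 1 ≤ n) (hd : 1 ≤ d) (hk : 2 ≤ k) (hkpow : ∃ m : ℕ, k = 2 ^ m)
    (ε : ℝ) (hε0 : 0 ≤ ε) (hε : ε < 1 / 2)
(z x xs : Fin n → EuclideanSpace ℝ (Fin d)) (w ws : Fin n → ℝ)
    (hw : ∀ i, w i ^ 2 = w i)
    (hwz : ∀ i, w i • (z i - x i) = 0)
    (hws : ∀ i, ws i ^ 2 = ws i)
    (hwsz : ∀ i, ws i • (z i - xs i) = 0)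
    (hwsum : 1 - ε ≤ (1 / (n : ℝ)) * ∑ i, w i)
    (hwssum : 1 - ε ≤ (1 / (n : ℝ)) * ∑ i, ws i)
    (μ μs : EuclideanSpace ℝ (Fin d))
    (hμ : μ = (1 / (n : ℝ)) • ∑ i, x i)
    (hμs : μs = (1 / (n : ℝ)) • ∑ i, xs i)
    (hmom : ∀ v : EuclideanSpace ℝ (Fin d),
      (1 / (n : ℝ)) * ∑ i, ⟪x i - μ, v⟫_ℝ ^ k ≤ (k : ℝ) ^ ((k : ℝ) / 2) * ‖v‖ ^ k)
    (hmoms : ∀ v : EuclideanSpace ℝ (Fin d),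
      (1 / (n : ℝ)) * ∑ i, ⟪xs i - μs, v⟫_ℝ ^ k ≤ (k : ℝ) ^ ((k : ℝ) / 2) * ‖v‖ ^ k) :
    ‖μ - μs‖ ^ 2 ≤ 4 * (k : ℝ) / (1 - 2 * ε) ^ ((2 : ℝ) / k) ∧
      ‖μ - μs‖ ^ k ≤ 2 ^ k * (k : ℝ) ^ ((k : ℝ) / 2) / (1 - 2 * ε) := by
  have hkeven : Even k := by
    obtain ⟨m, rfl⟩ := hkpow
    exact Nat.even_pow.mpr ⟨even_two, by rintro rfl; norm_num at hk⟩
  have hn' : (0 : ℝ) < n := by exact_mod_cast hn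
  have hk' : (0 : ℝ) < k := by exact_mod_cast (by omega : 0 < k)
  have hδ : 0 < 1 - 2 * ε := by linarith
  set K : ℝ := (k : ℝ) ^ ((k : ℝ) / 2) with hK
  have hKpos : 0 < K := Real.rpow_pos_of_pos hk' _
  set v := μ - μs with hv
  have hpow : ‖v‖ ^ k ≤ 2 ^ k * K / (1 - 2 * ε) := by
    rcases (norm_nonneg v).eq_or_lt with h0 | h0
    · rw [← h0, zero_pow (by omega)]
      positivity
    have hsum := Finset.sum_le_sum fun i (_ : i ∈ Finset.univ) =>
      overlap_mul_inner_pow_le hkeven (hw i) (hwz i) (hws i) (hwsz i) μ μs v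
    rw [← Finset.sum_mul, ← Finset.mul_sum, Finset.sum_add_distrib, Finset.sum_sub_distrib,
      Finset.sum_add_distrib, ← hv, real_inner_self_eq_norm_sq] at hsum
    simp only [Finset.sum_const, Finset.card_univ, Fintype.card_fin, nsmul_eq_mul,
      mul_one] at hsum
    have havg := mul_le_mul_of_nonneg_left hsum (by positivity : (0 : ℝ) ≤ 1 / n)
    have hoverlap : 1 - 2 * ε ≤ 1 / (n : ℝ) * (∑ i, w i + ∑ i, ws i - n) := by
      have : 1 / (n : ℝ) * n = 1 := by field_simp
      linarith
    have hnorm : (1 - 2 * ε) * ‖v‖ ^ k * ‖v‖ ^ k ≤ 2 ^ k * K * ‖v‖ ^ k := by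
      calc (1 - 2 * ε) * ‖v‖ ^ k * ‖v‖ ^ k = (1 - 2 * ε) * (‖v‖ ^ 2) ^ k := by ring
        _ ≤ 1 / (n : ℝ) * (∑ i, w i + ∑ i, ws i - n) * (‖v‖ ^ 2) ^ k := by gcongr
        _ ≤ 2 ^ (k - 1) * (1 / (n : ℝ) * ∑ i, ⟪x i - μ, v⟫_ℝ ^ k +
              1 / (n : ℝ) * ∑ i, ⟪xs i - μs, v⟫_ℝ ^ k) := by linarith
        _ ≤ 2 ^ (k - 1) * (K * ‖v‖ ^ k + K * ‖v‖ ^ k) :=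
          mul_le_mul_of_nonneg_left (add_le_add (hmom v) (hmoms v)) (by positivity)
        _ = 2 ^ (k - 1) * 2 * K * ‖v‖ ^ k := by ring
        _ = 2 ^ k * K * ‖v‖ ^ k := by rw [pow_sub_one_mul (by omega)]
    rw [le_div_iff₀ hδ, mul_comm]
    exact le_of_mul_le_mul_right hnorm (by positivity)
  refine ⟨?_, hpow⟩
  have hroot := Real.rpow_le_rpow (by positivity) hpow (by positivity : (0 : ℝ) ≤ 2 / k)
  have hpow_root {t : ℝ} (ht : 0 ≤ t) : (t ^ k) ^ ((2 : ℝ) / k) = t ^ 2 := by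
    rw [← Real.rpow_natCast_mul ht, mul_div_cancel₀ _ hk'.ne', Real.rpow_two]
  have hKroot : K ^ ((2 : ℝ) / k) = k := by
    rw [hK, ← Real.rpow_mul hk'.le, div_mul_div_cancel₀' hk'.ne']
    norm_num
  rw [hpow_root (norm_nonneg v), Real.div_rpow (by positivity) hδ.le,
    Real.mul_rpow (by positivity) hKpos.le, hpow_root zero_le_two, hKroot] at hroot
  norm_num at hroot
  exact hroot
end

section
/- Let D1 and D2 be Borel probability distributions on ℝ^d with finite means μ1 and μ2 respectively, each having bounded k-th moments: for every v ∈ ℝ^d and j ∈ {1,2}, E_{X∼Dj}[⟨X − μj, v⟩^k] ≤ k^{k/2}·‖v‖^k. Suppose d_TV(D1, D2) ≤ 1 − δ for some δ ∈ (0, 1]. Then ‖μ1 − μ2‖ ≤ 2·√k / δ^{1/k}. -/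
open Finset MeasureTheory
open scoped BigOperators InnerProductSpace

/-- The total variation distance between two measures:
`d_TV(P,Q) = sup_A |P(A) − Q(A)|` over measurable sets `A`. -/
noncomputable def tvDist {α : Type*} [MeasurableSpace α]
    (P Q : MeasureTheory.Measure α) : ℝ :=
  ⨆ A : {s : Set α // MeasurableSet s}, |(P A.1).toReal - (Q A.1).toReal|

/-- The total variation distance bounds the discrepancy of two probability measures on any
measurable set. -/
lemma abs_sub_le_tvDist {α : Type*} [MeasurableSpace α] (P Q : Measure α)
    [IsProbabilityMeasure P] [IsProbabilityMeasure Q] {s : Set α} (hs : MeasurableSet s) :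
    |P.real s - Q.real s| ≤ tvDist P Q := by
  have hbdd : BddAbove (Set.range fun A : {s : Set α // MeasurableSet s} =>
      |(P A.1).toReal - (Q A.1).toReal|) := by
    refine ⟨1, ?_⟩
    rintro _ ⟨A, rfl⟩
    exact abs_sub_le_of_nonneg_of_le ENNReal.toReal_nonneg (measureReal_le_one (μ := P))
      ENNReal.toReal_nonneg (measureReal_le_one (μ := Q))
  exact le_ciSup hbdd ⟨s, hs⟩

/-- Two probability measures dominate a common measure of mass at least `1 - tvDist P Q`. -/
lemma exists_le_le_one_sub_tvDist_le {α : Type*} [MeasurableSpace α] (P Q : Measure α)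
    [IsProbabilityMeasure P] [IsProbabilityMeasure Q] :
    ∃ ν : Measure α, ν ≤ P ∧ ν ≤ Q ∧ 1 - tvDist P Q ≤ ν.real Set.univ := by
  obtain ⟨s, hs⟩ := exists_isHahnDecomposition P Q
  refine ⟨P.restrict s + Q.restrict sᶜ, ?_, ?_, ?_⟩
  · calc P.restrict s + Q.restrict sᶜ ≤ P.restrict s + P.restrict sᶜ :=
          add_le_add le_rfl hs.ge_on_compl
      _ = P := Measure.restrict_add_restrict_compl hs.measurableSet
  · calc P.restrict s + Q.restrict sᶜ ≤ Q.restrict s + Q.restrict sᶜ :=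
          add_le_add hs.le_on le_rfl
      _ = Q := Measure.restrict_add_restrict_compl hs.measurableSet
  · have htv := abs_sub_le_tvDist P Q hs.measurableSet
    have hcompl := probReal_compl_eq_one_sub (μ := Q) hs.measurableSet
    rw [measureReal_add_apply, measureReal_restrict_apply_univ, measureReal_restrict_apply_univ]
    linarith [neg_abs_le (P.real s - Q.real s)]

/-- Lemma 2.5 of the paper: if two distributions with bounded `k`-th moments have overlap
at least `δ` (i.e. `d_TV ≤ 1 − δ`), then their means satisfy `‖μ₁ − μ₂‖ ≤ 2√k/δ^(1/k)`. -/
theorem identifiability_large_corruption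
    (d k : ℕ) (hd : 1 ≤ d) (hk : 2 ≤ k) (hkeven : Even k)
    (D1 D2 : Measure (EuclideanSpace ℝ (Fin d)))
    (hP1 : IsProbabilityMeasure D1) (hP2 : IsProbabilityMeasure D2)
    (hi1 : Integrable (id : EuclideanSpace ℝ (Fin d) → EuclideanSpace ℝ (Fin d)) D1)
    (hi2 : Integrable (id : EuclideanSpace ℝ (Fin d) → EuclideanSpace ℝ (Fin d)) D2)
    (μ1 μ2 : EuclideanSpace ℝ (Fin d))
    (hμ1 : μ1 = ∫ x, x ∂D1) (hμ2 : μ2 = ∫ x, x ∂D2)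
    (hint1 : ∀ v : EuclideanSpace ℝ (Fin d),
      Integrable (fun x => ⟪x - μ1, v⟫_ℝ ^ k) D1)
    (hint2 : ∀ v : EuclideanSpace ℝ (Fin d),
      Integrable (fun x => ⟪x - μ2, v⟫_ℝ ^ k) D2)
    (hmom1 : ∀ v : EuclideanSpace ℝ (Fin d),
      ∫ x, ⟪x - μ1, v⟫_ℝ ^ k ∂D1 ≤ (k : ℝ) ^ ((k : ℝ) / 2) * ‖v‖ ^ k)
    (hmom2 : ∀ v : EuclideanSpace ℝ (Fin d),
      ∫ x, ⟪x - μ2, v⟫_ℝ ^ k ∂D2 ≤ (k : ℝ) ^ ((k : ℝ) / 2) * ‖v‖ ^ k)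
    (δ : ℝ) (hδ0 : 0 < δ) (hδ1 : δ ≤ 1)
    (htv : tvDist D1 D2 ≤ 1 - δ) :
    ‖μ1 - μ2‖ ≤ 2 * Real.sqrt k / δ ^ (1 / (k : ℝ)) := by
  obtain ⟨ν, hν1, hν2, hν⟩ := exists_le_le_one_sub_tvDist_le D1 D2
  have : IsFiniteMeasure ν := isFiniteMeasure_of_le D1 hν1
  have hδν : δ ≤ ν.real Set.univ := by linarith
  set v := μ1 - μ2
  have hk0 : k ≠ 0 := by omega
  have hpow : ∀ x : EuclideanSpace ℝ (Fin d),
      (‖v‖ ^ 2) ^ k ≤ 2 ^ (k - 1) * (⟪x - μ2, v⟫_ℝ ^ k + ⟪x - μ1, v⟫_ℝ ^ k) := by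
    intro x
    have hsplit : ‖v‖ ^ 2 = ⟪x - μ2, v⟫_ℝ + -⟪x - μ1, v⟫_ℝ := by
      rw [← real_inner_self_eq_norm_sq, ← sub_eq_add_neg, ← inner_sub_left, sub_sub_sub_cancel_left]
    rw [hsplit, ← hkeven.neg_pow ⟪x - μ1, v⟫_ℝ]
    exact hkeven.add_pow_le
  have hν_int1 := (hint1 v).mono_measure hν1
  have hν_int2 := (hint2 v).mono_measure hν2
  have hν_mom1 := (integral_mono_measure hν1
    (ae_of_all _ fun x => hkeven.pow_nonneg ⟪x - μ1, v⟫_ℝ) (hint1 v)).trans (hmom1 v)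
  have hν_mom2 := (integral_mono_measure hν2
    (ae_of_all _ fun x => hkeven.pow_nonneg ⟪x - μ2, v⟫_ℝ) (hint2 v)).trans (hmom2 v)
  have hsqrt : (k : ℝ) ^ ((k : ℝ) / 2) = Real.sqrt k ^ k := by
    rw [Real.sqrt_eq_rpow, ← Real.rpow_mul_natCast (Nat.cast_nonneg k)]
    ring_nf
  rw [hsqrt] at hν_mom1 hν_mom2
  have hmain : δ * (‖v‖ ^ 2) ^ k ≤ (2 * Real.sqrt k) ^ k * ‖v‖ ^ k :=
    calc δ * (‖v‖ ^ 2) ^ k ≤ ν.real Set.univ * (‖v‖ ^ 2) ^ k := by gcongr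
      _ = ∫ _, (‖v‖ ^ 2) ^ k ∂ν := by rw [integral_const, smul_eq_mul]
      _ ≤ ∫ x, 2 ^ (k - 1) * (⟪x - μ2, v⟫_ℝ ^ k + ⟪x - μ1, v⟫_ℝ ^ k) ∂ν :=
          integral_mono (integrable_const _) ((hν_int2.add hν_int1).const_mul _) hpow
      _ = 2 ^ (k - 1) * (∫ x, ⟪x - μ2, v⟫_ℝ ^ k ∂ν + ∫ x, ⟪x - μ1, v⟫_ℝ ^ k ∂ν) := by
          rw [integral_const_mul, integral_add hν_int2 hν_int1]
      _ ≤ 2 ^ (k - 1) * (Real.sqrt k ^ k * ‖v‖ ^ k + Real.sqrt k ^ k * ‖v‖ ^ k) := by gcongr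
      _ = (2 * Real.sqrt k) ^ k * ‖v‖ ^ k := by
          rw [mul_pow, ← pow_sub_one_mul hk0 (2 : ℝ)]
          ring
  have hroot : (δ ^ (1 / (k : ℝ))) ^ k = δ := by
    rw [one_div, Real.rpow_inv_natCast_pow hδ0.le hk0]
  rw [le_div_iff₀ (by positivity)]
  rcases (norm_nonneg v).eq_or_lt with hv0 | hv0
  · rw [← hv0, zero_mul]
    positivity
  · refine le_of_pow_le_pow_left₀ hk0 (by positivity) ?_
    rw [mul_pow, hroot]
    refine le_of_mul_le_mul_right ?_ (pow_pos hv0 k)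
    calc ‖v‖ ^ k * δ * ‖v‖ ^ k = δ * (‖v‖ ^ 2) ^ k := by ring
      _ ≤ (2 * Real.sqrt k) ^ k * ‖v‖ ^ k := hmain
end

section
/- Under the constraint system together with the bounded k-th moment assumption, the following inequality holds: ((1/n)·Σ_{i=1}^n w_i·w*_i)^k · ‖μ − μ*‖^{2k} ≤ 2^k · k^{k/2} · ((1/n)·Σ_{i=1}^n w_i·w*_i)^{k−1} · ‖μ − μ*‖^k. -/
open Finset MeasureTheory
open scoped BigOperators InnerProductSpace

/-- The distance between two centres is controlled by the even powers of the deviations of any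
point from these centres, in the direction joining them. -/
theorem norm_sub_pow_two_mul_le_of_even {E : Type*} [NormedAddCommGroup E] [InnerProductSpace ℝ E]
    {k : ℕ} (hk : Even k) (y μ ν : E) :
    ‖μ - ν‖ ^ (2 * k) ≤ 2 ^ (k - 1) * (⟪y - μ, μ - ν⟫_ℝ ^ k + ⟪y - ν, μ - ν⟫_ℝ ^ k) := by
  have hsq : ‖μ - ν‖ ^ 2 = -⟪y - μ, μ - ν⟫_ℝ + ⟪y - ν, μ - ν⟫_ℝ := by
    rw [← real_inner_self_eq_norm_sq, ← inner_neg_left, ← inner_add_left]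
    congr 1
    abel
  rw [pow_mul, hsq, ← hk.neg_pow ⟪y - μ, μ - ν⟫_ℝ]
  exact hk.add_pow_le

/-- Lemma 2.6 of the paper (the Hopkins–Li SoS inequality): under the constraint system with
certifiably bounded `k`-th moments,
`((1/n)·Σ wᵢw*ᵢ)^k · ‖μ − μ*‖^(2k) ≤ 2^k · k^(k/2) · ((1/n)·Σ wᵢw*ᵢ)^(k−1) · ‖μ − μ*‖^k`. -/
theorem hopkins_li_inequality
    (n d k : ℕ) (hn : 1 ≤ n) (hd : 1 ≤ d) (hk : 2 ≤ k) (hkpow : ∃ m : ℕ, k = 2 ^ m)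
    (ε : ℝ) (hε0 : 0 ≤ ε) (hε : ε < 1 / 2)
(z x xs : Fin n → EuclideanSpace ℝ (Fin d)) (w ws : Fin n → ℝ)
    (hw : ∀ i, w i ^ 2 = w i)
    (hwz : ∀ i, w i • (z i - x i) = 0)
    (hws : ∀ i, ws i ^ 2 = ws i)
    (hwsz : ∀ i, ws i • (z i - xs i) = 0)
    (hwsum : 1 - ε ≤ (1 / (n : ℝ)) * ∑ i, w i)
    (hwssum : 1 - ε ≤ (1 / (n : ℝ)) * ∑ i, ws i)
    (μ μs : EuclideanSpace ℝ (Fin d))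
    (hμ : μ = (1 / (n : ℝ)) • ∑ i, x i)
    (hμs : μs = (1 / (n : ℝ)) • ∑ i, xs i)
    (hmom : ∀ v : EuclideanSpace ℝ (Fin d),
      (1 / (n : ℝ)) * ∑ i, ⟪x i - μ, v⟫_ℝ ^ k ≤ (k : ℝ) ^ ((k : ℝ) / 2) * ‖v‖ ^ k)
    (hmoms : ∀ v : EuclideanSpace ℝ (Fin d),
      (1 / (n : ℝ)) * ∑ i, ⟪xs i - μs, v⟫_ℝ ^ k ≤ (k : ℝ) ^ ((k : ℝ) / 2) * ‖v‖ ^ k) :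
    ((1 / (n : ℝ)) * ∑ i, w i * ws i) ^ k * ‖μ - μs‖ ^ (2 * k) ≤
      2 ^ k * (k : ℝ) ^ ((k : ℝ) / 2) *
        ((1 / (n : ℝ)) * ∑ i, w i * ws i) ^ (k - 1) * ‖μ - μs‖ ^ k := by
  have heven : Even k := by
    obtain ⟨m, rfl⟩ := hkpow
    refine even_two.pow_of_ne_zero ?_
    rintro rfl
    simp at hk
  have hzero_or_one : ∀ {a : ℝ}, a ^ 2 = a → a = 0 ∨ a = 1 := fun {a} h => by
    have : a * (a - 1) = 0 := by linarith
    exact (mul_eq_zero.mp this).imp_right sub_eq_zero.mp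
  set v := μ - μs
  set p := (1 / (n : ℝ)) * ∑ i, w i * ws i with hp
  set K := (k : ℝ) ^ ((k : ℝ) / 2)
  have hp0 : 0 ≤ p := mul_nonneg (by positivity) <| Finset.sum_nonneg fun i _ =>
    mul_nonneg (hw i ▸ sq_nonneg (w i)) (hws i ▸ sq_nonneg (ws i))
  have hpoint : ∀ i, w i * ws i * ‖v‖ ^ (2 * k) ≤
      2 ^ (k - 1) * (⟪x i - μ, v⟫_ℝ ^ k + ⟪xs i - μs, v⟫_ℝ ^ k) := fun i => by
    have hnonneg : 0 ≤ 2 ^ (k - 1) * (⟪x i - μ, v⟫_ℝ ^ k + ⟪xs i - μs, v⟫_ℝ ^ k) :=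
      mul_nonneg (by positivity) (add_nonneg (heven.pow_nonneg _) (heven.pow_nonneg _))
    rcases hzero_or_one (hw i) with h | h
    · simpa [h] using hnonneg
    rcases hzero_or_one (hws i) with h' | h'
    · simpa [h'] using hnonneg
    have hx : z i = x i := by simpa [h, sub_eq_zero] using hwz i
    have hxs : z i = xs i := by simpa [h', sub_eq_zero] using hwsz i
    rw [h, h', ← hx, ← hxs, one_mul, one_mul]
    exact norm_sub_pow_two_mul_le_of_even heven (z i) μ μs
  have hmean : p * ‖v‖ ^ (2 * k) ≤ 2 ^ k * K * ‖v‖ ^ k := by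
    calc p * ‖v‖ ^ (2 * k) = (1 / (n : ℝ)) * ∑ i, w i * ws i * ‖v‖ ^ (2 * k) := by
          rw [hp, mul_assoc, Finset.sum_mul]
      _ ≤ (1 / (n : ℝ)) *
          ∑ i, 2 ^ (k - 1) * (⟪x i - μ, v⟫_ℝ ^ k + ⟪xs i - μs, v⟫_ℝ ^ k) := by
          exact mul_le_mul_of_nonneg_left (Finset.sum_le_sum fun i _ => hpoint i) (by positivity)
      _ = 2 ^ (k - 1) * ((1 / (n : ℝ)) * ∑ i, ⟪x i - μ, v⟫_ℝ ^ k +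
          (1 / (n : ℝ)) * ∑ i, ⟪xs i - μs, v⟫_ℝ ^ k) := by
          rw [← Finset.mul_sum, Finset.sum_add_distrib]
          ring
      _ ≤ 2 ^ (k - 1) * (K * ‖v‖ ^ k + K * ‖v‖ ^ k) := by
          exact mul_le_mul_of_nonneg_left (add_le_add (hmom v) (hmoms v)) (by positivity)
      _ = 2 ^ k * K * ‖v‖ ^ k := by
          rw [← pow_sub_one_mul (by omega : k ≠ 0) (2 : ℝ)]
          ring
  calc p ^ k * ‖v‖ ^ (2 * k) = p ^ (k - 1) * (p * ‖v‖ ^ (2 * k)) := by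
        rw [← pow_sub_one_mul (by omega : k ≠ 0) p, mul_assoc]
    _ ≤ p ^ (k - 1) * (2 ^ k * K * ‖v‖ ^ k) := by gcongr
    _ = 2 ^ k * K * p ^ (k - 1) * ‖v‖ ^ k := by ring
end

section
/- Under the constraint system together with the sparse bounded t-th moment assumption, for every k-sparse unit vector v one has ⟨v, μ − μ*⟩ ≤ 2·M^{1/t} / (1 − 2ε)^{1/t}. -/
open Finset MeasureTheory
open scoped BigOperators InnerProductSpace

/-- A vector `v ∈ ℝ^d` is a `k`-sparse unit vector if `‖v‖ = 1` and at most `k` of its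
coordinates are nonzero. -/
def IsSparseUnitVector (d k : ℕ) (v : EuclideanSpace ℝ (Fin d)) : Prop :=
  ‖v‖ = 1 ∧ ∃ s : Finset (Fin d), s.card ≤ k ∧ ∀ i, i ∉ s → v i = 0

/-- If `x` and `xs` both agree with `z` wherever their `0`/`1` weights `w`, `ws` equal one, then
the `t`-th power of the projected mean shift, weighted by `w + ws - 1`, is controlled by the
projected deviations of `x` and `xs`. -/
theorem weighted_inner_pow_le {E : Type*} [NormedAddCommGroup E] [InnerProductSpace ℝ E]
    {t : ℕ} (ht : Even t) {v z x xs μ μs : E} {w ws : ℝ}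
    (hw : w ^ 2 = w) (hws : ws ^ 2 = ws)
    (hwz : w • (z - x) = 0) (hwsz : ws • (z - xs) = 0) :
    (w + ws - 1) * ⟪v, μ - μs⟫_ℝ ^ t ≤
      2 ^ (t - 1) * (⟪v, xs - μs⟫_ℝ ^ t + ⟪v, x - μ⟫_ℝ ^ t) := by
  have hD := ht.pow_nonneg ⟪v, μ - μs⟫_ℝ
  have hR : 0 ≤ 2 ^ (t - 1) * (⟪v, xs - μs⟫_ℝ ^ t + ⟪v, x - μ⟫_ℝ ^ t) :=
    mul_nonneg (by positivity) (add_nonneg (ht.pow_nonneg _) (ht.pow_nonneg _))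
  have h01 {a : ℝ} (ha : a ^ 2 = a) : a = 0 ∨ a = 1 := by
    rwa [sq, ← IsIdempotentElem, IsIdempotentElem.iff_eq_zero_or_one] at ha
  rcases h01 hw with rfl | rfl <;> rcases h01 hws with rfl | rfl
  · linarith
  · linarith
  · linarith
  · rw [one_smul, sub_eq_zero] at hwz hwsz
    subst hwz hwsz
    have h := ht.add_pow_le (a := ⟪v, z - μs⟫_ℝ) (b := -⟪v, z - μ⟫_ℝ)
    rw [← sub_eq_add_neg, ← inner_sub_right, sub_sub_sub_cancel_left, ht.neg_pow] at h
    linarith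

/-- Deterministic core of Theorem 3.2: robust sparse mean estimation near the breakdown
point, `⟨v, μ − μ*⟩ ≤ 2·M^(1/t)/(1 − 2ε)^(1/t)` for every `k`-sparse unit vector `v`. -/
theorem sparse_mean_identifiability
    (n d k t : ℕ) (hn : 1 ≤ n) (hd : 1 ≤ d) (hk1 : 1 ≤ k) (hkd : k ≤ d)
    (ht : 2 ≤ t) (htpow : ∃ m : ℕ, t = 2 ^ m)
    (M : ℝ) (hM : 0 < M)
    (ε : ℝ) (hε0 : 0 ≤ ε) (hε : ε < 1 / 2)
(z x xs : Fin n → EuclideanSpace ℝ (Fin d)) (w ws : Fin n → ℝ)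
    (hw : ∀ i, w i ^ 2 = w i)
    (hwz : ∀ i, w i • (z i - x i) = 0)
    (hws : ∀ i, ws i ^ 2 = ws i)
    (hwsz : ∀ i, ws i • (z i - xs i) = 0)
    (hwsum : 1 - ε ≤ (1 / (n : ℝ)) * ∑ i, w i)
    (hwssum : 1 - ε ≤ (1 / (n : ℝ)) * ∑ i, ws i)
    (μ μs : EuclideanSpace ℝ (Fin d))
    (hμ : μ = (1 / (n : ℝ)) • ∑ i, x i)
    (hμs : μs = (1 / (n : ℝ)) • ∑ i, xs i)
    (hmom : ∀ v : EuclideanSpace ℝ (Fin d), IsSparseUnitVector d k v →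
      ((1 / (n : ℝ)) * ∑ i, ⟪v, x i - μ⟫_ℝ ^ t) ^ 2 ≤ M ^ 2)
    (hmoms : ∀ v : EuclideanSpace ℝ (Fin d), IsSparseUnitVector d k v →
      ((1 / (n : ℝ)) * ∑ i, ⟪v, xs i - μs⟫_ℝ ^ t) ^ 2 ≤ M ^ 2) :
    ∀ v : EuclideanSpace ℝ (Fin d), IsSparseUnitVector d k v →
      ⟪v, μ - μs⟫_ℝ ≤ 2 * M ^ (1 / (t : ℝ)) / (1 - 2 * ε) ^ (1 / (t : ℝ)) := by
  intro v hv
  have hn' : (0 : ℝ) < n := by exact_mod_cast hn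
  have ht0 : t ≠ 0 := by omega
  have heven : Even t := by
    obtain ⟨m, rfl⟩ := htpow
    have hm : m ≠ 0 := by rintro rfl; norm_num at ht
    exact (Nat.even_pow' hm).2 even_two
  have hε' : 0 < 1 - 2 * ε := by linarith
  have hxM := le_of_abs_le (abs_le_of_sq_le_sq (hmom v hv) hM.le)
  have hxsM := le_of_abs_le (abs_le_of_sq_le_sq (hmoms v hv) hM.le)
  have hpt (i : Fin n) : (w i + ws i - 1) * ⟪v, μ - μs⟫_ℝ ^ t ≤
      2 ^ (t - 1) * (⟪v, xs i - μs⟫_ℝ ^ t + ⟪v, x i - μ⟫_ℝ ^ t) :=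
    weighted_inner_pow_le heven (hw i) (hws i) (hwz i) (hwsz i)
  have hsum := Finset.sum_le_sum fun i (_ : i ∈ (Finset.univ : Finset (Fin n))) => hpt i
  rw [← Finset.sum_mul, ← Finset.mul_sum, Finset.sum_add_distrib, Finset.sum_sub_distrib,
    Finset.sum_add_distrib] at hsum
  simp only [Finset.sum_const, Finset.card_univ, Fintype.card_fin, nsmul_eq_mul, mul_one] at hsum
  rw [one_div_mul_eq_div, div_le_iff₀ hn'] at hxM hxsM
  rw [one_div_mul_eq_div, le_div_iff₀ hn'] at hwsum hwssum
  have hpow : (1 - 2 * ε) * ⟪v, μ - μs⟫_ℝ ^ t ≤ 2 ^ t * M := by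
    have h2 : (2 : ℝ) ^ t = 2 ^ (t - 1) * 2 := (pow_sub_one_mul ht0 2).symm
    refine le_of_mul_le_mul_left ?_ hn'
    calc (n : ℝ) * ((1 - 2 * ε) * ⟪v, μ - μs⟫_ℝ ^ t)
        = (n * (1 - 2 * ε)) * ⟪v, μ - μs⟫_ℝ ^ t := by ring
      _ ≤ (∑ i, w i + ∑ i, ws i - n) * ⟪v, μ - μs⟫_ℝ ^ t :=
          mul_le_mul_of_nonneg_right (by linarith) (heven.pow_nonneg _)
      _ ≤ _ := hsum
      _ ≤ 2 ^ (t - 1) * (M * n + M * n) := by gcongr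
      _ = n * (2 ^ t * M) := by rw [h2]; ring
  refine (le_abs_self _).trans ((pow_le_pow_iff_left₀ (abs_nonneg _) (by positivity) ht0).1 ?_)
  rw [heven.pow_abs, div_pow, mul_pow, one_div, Real.rpow_inv_natCast_pow hM.le ht0,
    Real.rpow_inv_natCast_pow hε'.le ht0, le_div_iff₀ hε', mul_comm]
  exact hpow
end

section
/- Under the constraint system together with the sparse bounded t-th moment assumption, with δ = 1 − 2ε, for every k-sparse unit vector v one has ⟨v, μ − μ*⟩ ≤ 2^{2−1/t} · ε^{1−1/t} · M^{1/t} / δ. -/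
open Finset MeasureTheory
open scoped BigOperators InnerProductSpace

/-- Hölder's inequality for weights in `[0, 1]` and an even exponent. -/
lemma sum_weight_mul_abs_le {ι : Type*} [Fintype ι] {t : ℕ} (ht : 2 ≤ t) (hte : Even t)
    {r a : ι → ℝ} {A B : ℝ} (hr0 : ∀ i, 0 ≤ r i) (hr1 : ∀ i, r i ≤ 1)
    (hA : ∑ i, r i ≤ A) (hB : ∑ i, a i ^ t ≤ B) :
    ∑ i, r i * |a i| ≤ A ^ (1 - 1 / (t : ℝ)) * B ^ (1 / (t : ℝ)) := by
  have ht1 : (1 : ℝ) ≤ t := by exact_mod_cast (by omega : 1 ≤ t)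
  have hexp : (0 : ℝ) ≤ 1 - 1 / (t : ℝ) := by
    rw [sub_nonneg, div_le_one (by linarith)]
    exact ht1
  have hr : 0 ≤ ∑ i, r i := sum_nonneg fun i _ => hr0 i
  have hra : 0 ≤ ∑ i, r i * a i ^ t := sum_nonneg fun i _ => mul_nonneg (hr0 i) (hte.pow_nonneg _)
  have hraB : ∑ i, r i * a i ^ t ≤ B :=
    (sum_le_sum fun i _ => mul_le_of_le_one_left (hte.pow_nonneg _) (hr1 i)).trans hB
  have h := Real.inner_le_weight_mul_Lp_of_nonneg univ ht1 r (fun i => |a i|) hr0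
    fun i => abs_nonneg _
  simp only [Real.rpow_natCast, hte.pow_abs, ← one_div] at h
  exact h.trans <| mul_le_mul (Real.rpow_le_rpow hr hA hexp)
    (Real.rpow_le_rpow hra hraB (by positivity)) (Real.rpow_nonneg hra _)
    (Real.rpow_nonneg (hr.trans hA) _)

/-- The inner products of `v` with the deviations from the empirical mean sum to zero. -/
lemma sum_inner_sub_mean {E : Type*} [NormedAddCommGroup E] [InnerProductSpace ℝ E]
    {n : ℕ} (hn : 1 ≤ n) (v : E) {x : Fin n → E} {μ : E}
    (hμ : μ = (1 / (n : ℝ)) • ∑ i, x i) : ∑ i, ⟪v, x i - μ⟫_ℝ = 0 := by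
  have hn0 : (n : ℝ) ≠ 0 := by exact_mod_cast (by omega : n ≠ 0)
  rw [← inner_sum, sum_sub_distrib, sum_const, card_univ, Fintype.card_fin, hμ,
    ← Nat.cast_smul_eq_nsmul ℝ, smul_smul, mul_one_div_cancel hn0, one_smul, sub_self,
    inner_zero_right]

/-- Two centred families with `t`-th moments at most `M` that differ by the constant `D` on
all but a `2ε` fraction of indices satisfy the stated bound on `D`. -/
lemma shift_le_of_moment_bound {n t : ℕ} (hn : 1 ≤ n) (ht : 2 ≤ t) (hte : Even t)
    {M ε D : ℝ} (hM : 0 < M) (hε0 : 0 ≤ ε) (hε : ε < 1 / 2) {a b u : Fin n → ℝ}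
    (hu0 : ∀ i, 0 ≤ u i) (hu1 : ∀ i, u i ≤ 1) (hab : ∀ i, u i * D = u i * (b i - a i))
    (ha : ∑ i, a i = 0) (hb : ∑ i, b i = 0) (hu : n * (1 - 2 * ε) ≤ ∑ i, u i)
    (hat : ∑ i, a i ^ t ≤ n * M) (hbt : ∑ i, b i ^ t ≤ n * M) :
    D ≤ (2 : ℝ) ^ ((2 : ℝ) - 1 / (t : ℝ)) * ε ^ (1 - 1 / (t : ℝ)) * M ^ (1 / (t : ℝ)) /
      (1 - 2 * ε) := by
  have hδ : 0 < 1 - 2 * ε := by linarith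
  have hn0 : (0 : ℝ) < n := by exact_mod_cast hn
  rw [le_div_iff₀ hδ]
  rcases le_total D 0 with hD | hD
  · exact (mul_nonpos_of_nonpos_of_nonneg hD hδ.le).trans (by positivity)
  have hr : ∑ i, (1 - u i) ≤ n * (2 * ε) := by
    rw [sum_sub_distrib]
    simp only [sum_const, card_univ, Fintype.card_fin, nsmul_eq_mul, mul_one]
    linarith
  have hA := sum_weight_mul_abs_le ht hte (r := fun i => 1 - u i)
    (fun i => sub_nonneg.2 (hu1 i)) (fun i => sub_le_self _ (hu0 i)) hr hat
  have hB := sum_weight_mul_abs_le ht hte (r := fun i => 1 - u i)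
    (fun i => sub_nonneg.2 (hu1 i)) (fun i => sub_le_self _ (hu0 i)) hr hbt
  have hsplit : (∑ i, u i) * D = ∑ i, (1 - u i) * (a i - b i) := by
    have h : ∑ i, (1 - u i) * (a i - b i) = ∑ i, a i - ∑ i, b i + ∑ i, u i * (b i - a i) := by
      rw [← sum_sub_distrib, ← sum_add_distrib]
      exact sum_congr rfl fun i _ => by ring
    rw [h, ha, hb, sum_mul, sum_congr rfl fun i _ => hab i]
    ring
  have htri : ∑ i, (1 - u i) * (a i - b i) ≤
      ∑ i, (1 - u i) * |a i| + ∑ i, (1 - u i) * |b i| := by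
    rw [← sum_add_distrib]
    refine sum_le_sum fun i _ => ?_
    rw [← mul_add]
    exact mul_le_mul_of_nonneg_left (by linarith [le_abs_self (a i), neg_abs_le (b i)])
      (sub_nonneg.2 (hu1 i))
  have hconst : (n * (2 * ε)) ^ (1 - 1 / (t : ℝ)) * (n * M) ^ (1 / (t : ℝ)) * 2 =
      n * ((2 : ℝ) ^ ((2 : ℝ) - 1 / (t : ℝ)) * ε ^ (1 - 1 / (t : ℝ)) * M ^ (1 / (t : ℝ))) := by
    have h2 : (2 : ℝ) ^ ((2 : ℝ) - 1 / (t : ℝ)) = 2 ^ (1 - 1 / (t : ℝ)) * 2 := by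
      rw [← Real.rpow_add_one two_ne_zero]
      ring_nf
    have hnn : (n : ℝ) ^ (1 - 1 / (t : ℝ)) * (n : ℝ) ^ (1 / (t : ℝ)) = n := by
      rw [← Real.rpow_add hn0, sub_add_cancel, Real.rpow_one]
    rw [Real.mul_rpow hn0.le (by positivity), Real.mul_rpow zero_le_two hε0,
      Real.mul_rpow hn0.le hM.le, h2]
    linear_combination ((2 : ℝ) ^ (1 - 1 / (t : ℝ)) * 2 * ε ^ (1 - 1 / (t : ℝ)) *
      M ^ (1 / (t : ℝ))) * hnn
  refine le_of_mul_le_mul_left ?_ hn0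
  rw [← hconst]
  linarith [mul_le_mul_of_nonneg_right hu hD]

/-- Theorem D.3 of the paper: optimal breakdown point for robust sparse mean estimation,
`⟨v, μ − μ*⟩ ≤ 2^(2−1/t) · ε^(1−1/t) · M^(1/t) / δ` with `δ = 1 − 2ε`. -/
theorem sparse_mean_optimal_breakdown
    (n d k t : ℕ) (hn : 1 ≤ n) (hd : 1 ≤ d) (hk1 : 1 ≤ k) (hkd : k ≤ d)
    (ht : 2 ≤ t) (htpow : ∃ m : ℕ, t = 2 ^ m)
    (M : ℝ) (hM : 0 < M)
    (ε : ℝ) (hε0 : 0 ≤ ε) (hε : ε < 1 / 2)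
(z x xs : Fin n → EuclideanSpace ℝ (Fin d)) (w ws : Fin n → ℝ)
    (hw : ∀ i, w i ^ 2 = w i)
    (hwz : ∀ i, w i • (z i - x i) = 0)
    (hws : ∀ i, ws i ^ 2 = ws i)
    (hwsz : ∀ i, ws i • (z i - xs i) = 0)
    (hwsum : 1 - ε ≤ (1 / (n : ℝ)) * ∑ i, w i)
    (hwssum : 1 - ε ≤ (1 / (n : ℝ)) * ∑ i, ws i)
    (μ μs : EuclideanSpace ℝ (Fin d))
    (hμ : μ = (1 / (n : ℝ)) • ∑ i, x i)
    (hμs : μs = (1 / (n : ℝ)) • ∑ i, xs i)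
    (hmom : ∀ v : EuclideanSpace ℝ (Fin d), IsSparseUnitVector d k v →
      ((1 / (n : ℝ)) * ∑ i, ⟪v, x i - μ⟫_ℝ ^ t) ^ 2 ≤ M ^ 2)
    (hmoms : ∀ v : EuclideanSpace ℝ (Fin d), IsSparseUnitVector d k v →
      ((1 / (n : ℝ)) * ∑ i, ⟪v, xs i - μs⟫_ℝ ^ t) ^ 2 ≤ M ^ 2) :
    ∀ v : EuclideanSpace ℝ (Fin d), IsSparseUnitVector d k v →
      ⟪v, μ - μs⟫_ℝ ≤
        (2 : ℝ) ^ ((2 : ℝ) - 1 / (t : ℝ)) * ε ^ (1 - 1 / (t : ℝ)) * M ^ (1 / (t : ℝ)) /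
          (1 - 2 * ε) := by
  intro v hv
  have hn0 : (0 : ℝ) < n := by exact_mod_cast hn
  have hte : Even t := by
    obtain ⟨m, rfl⟩ := htpow
    exact even_two.pow_of_ne_zero (by rintro rfl; omega)
  have hw01 : ∀ i, w i = 0 ∨ w i = 1 := fun i => by
    grind [hw i]
  have hws01 : ∀ i, ws i = 0 ∨ ws i = 1 := fun i => by
    grind [hws i]
  have hmoment : ∀ {S : ℝ}, ((1 / (n : ℝ)) * S) ^ 2 ≤ M ^ 2 → S ≤ n * M := fun {S} h => by
    have h' := (le_abs_self _).trans (abs_le_of_sq_le_sq h hM.le)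
    rwa [one_div_mul_eq_div, div_le_iff₀' hn0] at h'
  rw [one_div_mul_eq_div, le_div_iff₀' hn0] at hwsum hwssum
  refine shift_le_of_moment_bound hn ht hte hM hε0 hε (u := fun i => w i * ws i)
    (fun i => ?_) (fun i => ?_) (fun i => ?_) (sum_inner_sub_mean hn v hμ)
    (sum_inner_sub_mean hn v hμs) ?_ (hmoment (hmom v hv)) (hmoment (hmoms v hv))
  · rcases hw01 i with h | h <;> rcases hws01 i with h' | h' <;> simp [h, h']
  · rcases hw01 i with h | h <;> rcases hws01 i with h' | h' <;> simp [h, h']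
  · rcases hw01 i with h | h
    · simp [h]
    rcases hws01 i with h' | h'
    · simp [h']
    have hx := hwz i
    have hxs := hwsz i
    rw [h, one_smul, sub_eq_zero] at hx
    rw [h', one_smul, sub_eq_zero] at hxs
    rw [← hx, ← hxs]
    simp only [inner_sub_right]
    ring
  · have hpt : ∑ i, (w i + ws i - 1) ≤ ∑ i, w i * ws i := by
      refine sum_le_sum fun i _ => ?_
      rcases hw01 i with h | h <;> rcases hws01 i with h' | h' <;> simp [h, h']
    rw [sum_sub_distrib, sum_add_distrib] at hpt
    simp only [sum_const, card_univ, Fintype.card_fin, nsmul_eq_mul, mul_one] at hpt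
    linarith
end

section
/- For every ε ∈ (0, 1/2) there exist Borel probability distributions D1 and D2 on ℝ such that: (1) d_TV(D1, D2) ≤ 2ε; (2) D1 and D2 each have finite mean and variance at most 1; (3) the means μ1 of D1 and μ2 of D2 satisfy |μ1 − μ2| ≥ √(ε/(1 − 2ε)). -/
open MeasureTheory

/-- The mixture `(1 - p) δ_x + p δ_y` of two point masses. -/
noncomputable def twoPoint {α : Type*} [MeasurableSpace α] (p : ℝ) (x y : α) : Measure α :=
  ENNReal.ofReal (1 - p) • Measure.dirac x + ENNReal.ofReal p • Measure.dirac y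

section twoPoint

variable {α : Type*} [MeasurableSpace α] {p : ℝ}

theorem isProbabilityMeasure_twoPoint (hp0 : 0 ≤ p) (hp1 : p ≤ 1) (x y : α) :
    IsProbabilityMeasure (twoPoint p x y) := by
  constructor
  simp [twoPoint, ← ENNReal.ofReal_add (sub_nonneg.2 hp1) hp0]

theorem twoPoint_toReal_apply (hp0 : 0 ≤ p) (hp1 : p ≤ 1) (x y : α) (s : Set α) :
    (twoPoint p x y s).toReal =
      (1 - p) * (Measure.dirac x s).toReal + p * (Measure.dirac y s).toReal := by
  simp only [twoPoint, Measure.add_apply, Measure.smul_apply, smul_eq_mul]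
  rw [ENNReal.toReal_add (ENNReal.mul_ne_top ENNReal.ofReal_ne_top (measure_ne_top _ _))
    (ENNReal.mul_ne_top ENNReal.ofReal_ne_top (measure_ne_top _ _)), ENNReal.toReal_mul,
    ENNReal.toReal_mul, ENNReal.toReal_ofReal (sub_nonneg.2 hp1), ENNReal.toReal_ofReal hp0]

theorem tvDist_dirac_twoPoint_le (hp0 : 0 ≤ p) (hp1 : p ≤ 1) (x y : α) :
    tvDist (Measure.dirac x) (twoPoint p x y) ≤ p := by
  have : Nonempty {s : Set α // MeasurableSet s} := ⟨⟨∅, MeasurableSet.empty⟩⟩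
  refine ciSup_le fun A => ?_
  have dirac_le_one (z : α) : (Measure.dirac z A.1).toReal ≤ 1 := measureReal_le_one
  have dirac_nonneg (z : α) : 0 ≤ (Measure.dirac z A.1).toReal := ENNReal.toReal_nonneg
  rw [twoPoint_toReal_apply hp0 hp1, abs_le]
  constructor <;> nlinarith [dirac_le_one x, dirac_le_one y, dirac_nonneg x, dirac_nonneg y]

variable [MeasurableSingletonClass α]

theorem integrable_twoPoint (p : ℝ) (x y : α) (f : α → ℝ) : Integrable f (twoPoint p x y) :=
  ((integrable_dirac (by simp)).smul_measure ENNReal.ofReal_ne_top).add_measure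
    ((integrable_dirac (by simp)).smul_measure ENNReal.ofReal_ne_top)

theorem integral_twoPoint (hp0 : 0 ≤ p) (hp1 : p ≤ 1) (x y : α) (f : α → ℝ) :
    ∫ z, f z ∂twoPoint p x y = (1 - p) * f x + p * f y := by
  rw [twoPoint, integral_add_measure
    ((integrable_dirac (by simp)).smul_measure ENNReal.ofReal_ne_top)
    ((integrable_dirac (by simp)).smul_measure ENNReal.ofReal_ne_top)]
  simp [integral_smul_measure, ENNReal.toReal_ofReal, hp0, hp1]

end twoPoint

/-- Lemma 1.2 of the paper: the information-theoretic lower bound for robust mean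
estimation of bounded variance distributions. For every `ε ∈ (0, 1/2)` there are two
one-dimensional distributions with total variation distance at most `2ε`, variance at most
`1`, and means at least `√(ε/(1 − 2ε))` apart. -/
theorem lower_bound_bounded_covariance (ε : ℝ) (hε0 : 0 < ε) (hε : ε < 1 / 2) :
    ∃ D1 D2 : Measure ℝ, IsProbabilityMeasure D1 ∧ IsProbabilityMeasure D2 ∧
      tvDist D1 D2 ≤ 2 * ε ∧
      Integrable (id : ℝ → ℝ) D1 ∧ Integrable (id : ℝ → ℝ) D2 ∧
      Integrable (fun x => (x - ∫ y, y ∂D1) ^ 2) D1 ∧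
      Integrable (fun x => (x - ∫ y, y ∂D2) ^ 2) D2 ∧
      (∫ x, (x - ∫ y, y ∂D1) ^ 2 ∂D1) ≤ 1 ∧
      (∫ x, (x - ∫ y, y ∂D2) ^ 2 ∂D2) ≤ 1 ∧
      Real.sqrt (ε / (1 - 2 * ε)) ≤ |(∫ y, y ∂D1) - ∫ y, y ∂D2| := by
  have hp0 : 0 ≤ 2 * ε := by linarith
  have hp1 : 2 * ε ≤ 1 := by linarith
  have hq : 0 < 1 - 2 * ε := by linarith
  set r := Real.sqrt (ε / (1 - 2 * ε))
  have hr_sq : r ^ 2 = ε / (1 - 2 * ε) := Real.sq_sqrt (by positivity)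
  have hr_nonneg : 0 ≤ r := Real.sqrt_nonneg _
  have mean_eq : ∫ y, y ∂twoPoint (2 * ε) 0 (r / (2 * ε)) = r := by
    rw [integral_twoPoint hp0 hp1 _ _ fun y => y]
    field_simp
    ring
  refine ⟨Measure.dirac 0, twoPoint (2 * ε) 0 (r / (2 * ε)), inferInstance,
    isProbabilityMeasure_twoPoint hp0 hp1 _ _, tvDist_dirac_twoPoint_le hp0 hp1 _ _,
    integrable_dirac (by simp), integrable_twoPoint _ _ _ _, integrable_dirac (by simp),
    integrable_twoPoint _ _ _ _, by simp, ?_, ?_⟩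
  · rw [mean_eq, integral_twoPoint hp0 hp1]
    have variance_eq : (1 - 2 * ε) * (0 - r) ^ 2 + 2 * ε * (r / (2 * ε) - r) ^ 2
        = r ^ 2 * (1 - 2 * ε) / (2 * ε) := by
      field_simp
      ring
    rw [variance_eq, hr_sq, div_mul_cancel₀ _ hq.ne', div_le_one (by positivity)]
    linarith
  · rw [mean_eq]
    simp [abs_of_nonneg hr_nonneg]
end

section
/- For every ε ∈ [1/4, 1/2) there exist real numbers μ1 and μ2 such that the one-dimensional Gaussian distributions N(μ1, 1) and N(μ2, 1) satisfy: (1) d_TV(N(μ1,1), N(μ2,1)) ≤ 2ε; (2) |μ1 − μ2| ≥ √(log(1/(1 − 2ε)) − log 2). -/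
open MeasureTheory ProbabilityTheory

/-- If `P` and `Q` both dominate `c • R` on measurable sets, for a probability measure `R`, then
their total variation distance is at most `1 - c`. -/
lemma tvDist_le_one_sub {α : Type*} [MeasurableSpace α] {P Q R : Measure α}
    [IsProbabilityMeasure P] [IsProbabilityMeasure Q] [IsProbabilityMeasure R] {c : ℝ}
    (hP : ∀ s, MeasurableSet s → c * R.real s ≤ P.real s)
    (hQ : ∀ s, MeasurableSet s → c * R.real s ≤ Q.real s) :
    tvDist P Q ≤ 1 - c := by
  have : Nonempty {s : Set α // MeasurableSet s} := ⟨⟨∅, MeasurableSet.empty⟩⟩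
  refine ciSup_le fun ⟨A, hA⟩ => ?_
  change |P.real A - Q.real A| ≤ 1 - c
  have hPc := hP _ hA.compl
  have hQc := hQ _ hA.compl
  rw [probReal_compl_eq_one_sub hA, probReal_compl_eq_one_sub hA] at hPc hQc
  rw [abs_le]
  constructor <;> linarith [hP A hA, hQ A hA]

/-- A unit-variance Gaussian density dominates a multiple of the centred Gaussian density of
variance `1 / 2`. -/
lemma mul_gaussianPDFReal_half_le (m x : ℝ) :
    Real.exp (-m ^ 2) / 2 * gaussianPDFReal 0 (1 / 2) x ≤ gaussianPDFReal m 1 x := by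
  have hsqrt : √(2 * Real.pi) ≤ 2 * √Real.pi := by
    rw [Real.sqrt_mul (by norm_num)]
    gcongr
    rw [Real.sqrt_le_left (by norm_num)]
    norm_num
  have hinv : (√Real.pi)⁻¹ / 2 ≤ (√(2 * Real.pi))⁻¹ := by
    rw [div_eq_mul_inv, ← mul_inv, mul_comm]
    gcongr
  have hexp : Real.exp (-m ^ 2) * Real.exp (-x ^ 2) ≤ Real.exp (-(x - m) ^ 2 / 2) := by
    rw [← Real.exp_add]
    gcongr
    nlinarith [sq_nonneg (x + m)]
  have hhalf : gaussianPDFReal 0 (1 / 2) x = (√Real.pi)⁻¹ * Real.exp (-x ^ 2) := by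
    simp [gaussianPDFReal]
    field_simp
  calc Real.exp (-m ^ 2) / 2 * gaussianPDFReal 0 (1 / 2) x
      = (√Real.pi)⁻¹ / 2 * (Real.exp (-m ^ 2) * Real.exp (-x ^ 2)) := by rw [hhalf]; ring
    _ ≤ (√(2 * Real.pi))⁻¹ * Real.exp (-(x - m) ^ 2 / 2) := by gcongr
    _ = gaussianPDFReal m 1 x := by simp [gaussianPDFReal]

lemma mul_gaussianReal_half_le (m : ℝ) (s : Set ℝ) :
    Real.exp (-m ^ 2) / 2 * (gaussianReal 0 (1 / 2)).real s ≤ (gaussianReal m 1).real s := by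
  have hreal (μ : ℝ) {v : NNReal} (hv : v ≠ 0) :
      (gaussianReal μ v).real s = ∫ x in s, gaussianPDFReal μ v x := by
    rw [measureReal_def, gaussianReal_apply_eq_integral μ hv, ENNReal.toReal_ofReal]
    exact integral_nonneg fun x => gaussianPDFReal_nonneg μ v x
  rw [hreal 0 (by norm_num), hreal m one_ne_zero, ← integral_const_mul]
  exact integral_mono ((integrable_gaussianPDFReal _ _).integrableOn.const_mul _)
    (integrable_gaussianPDFReal _ _).integrableOn fun x => mul_gaussianPDFReal_half_le m x

/-- The total variation distance between `N(m, 1)` and `N(-m, 1)` is at most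
`1 - exp (-m ^ 2) / 2`. -/
lemma tvDist_gaussianReal_neg_le (m : ℝ) :
    tvDist (gaussianReal m 1) (gaussianReal (-m) 1) ≤ 1 - Real.exp (-m ^ 2) / 2 :=
  tvDist_le_one_sub (R := gaussianReal 0 (1 / 2)) (fun s _ => mul_gaussianReal_half_le m s)
    fun s _ => by simpa using mul_gaussianReal_half_le (-m) s

/-- Lemma 1.7 of the paper: the information-theoretic lower bound for robust Gaussian mean
estimation. For every `ε ∈ [1/4, 1/2)` there are two unit-variance Gaussians with total
variation distance at most `2ε` whose means are at least `√(log(1/(1−2ε)) − log 2)` apart. -/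
theorem lower_bound_gaussian (ε : ℝ) (hε0 : 1 / 4 ≤ ε) (hε : ε < 1 / 2) :
    ∃ μ1 μ2 : ℝ,
      tvDist (gaussianReal μ1 1) (gaussianReal μ2 1) ≤ 2 * ε ∧
      Real.sqrt (Real.log (1 / (1 - 2 * ε)) - Real.log 2) ≤ |μ1 - μ2| := by
  have hpos : 0 < 1 - 2 * ε := by linarith
  set L := Real.log (1 / (1 - 2 * ε)) - Real.log 2 with hL
  have hL_eq : L = -Real.log (2 * (1 - 2 * ε)) := by
    rw [hL, one_div, Real.log_inv, Real.log_mul two_ne_zero hpos.ne']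
    ring
  have hL_nonneg : 0 ≤ L := by
    rw [hL_eq, neg_nonneg]
    exact Real.log_nonpos (by linarith) (by linarith)
  refine ⟨√L, -√L, (tvDist_gaussianReal_neg_le _).trans_eq ?_, ?_⟩
  · rw [Real.sq_sqrt hL_nonneg, hL_eq, neg_neg, Real.exp_log (by linarith)]
    ring
  · exact (by linarith [Real.sqrt_nonneg L] : √L ≤ √L - -√L).trans (le_abs_self _)
end

section
/- For every ε ∈ (1/4, 1/2) there exist Borel probability distributions D1 and D2 on ℝ such that: (1) D1 = N(0,1); (2) d_TV(D1, D2) ≤ 2ε; (3) D2 has finite mean μ2 and variance at most 1 + 3·(1 − 2ε); (4) μ2 ≥ (1 − 2ε)^{−1/2}. -/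
open MeasureTheory ProbabilityTheory

/-- The mixture `(1 - w) P + w Q` of two measures. -/
noncomputable def mixture {α : Type*} [MeasurableSpace α] (w : ℝ) (P Q : Measure α) : Measure α :=
  ENNReal.ofReal (1 - w) • P + ENNReal.ofReal w • Q

section Mixture

variable {α : Type*} [MeasurableSpace α] {w : ℝ} {P Q : Measure α}

lemma mixture_apply_toReal [IsFiniteMeasure P] [IsFiniteMeasure Q] (h0 : 0 ≤ w) (h1 : w ≤ 1)
    (s : Set α) :
    (mixture w P Q s).toReal = (1 - w) * (P s).toReal + w * (Q s).toReal := by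
  simp only [mixture, Measure.add_apply, Measure.smul_apply, smul_eq_mul]
  rw [ENNReal.toReal_add (by finiteness) (by finiteness), ENNReal.toReal_mul, ENNReal.toReal_mul,
    ENNReal.toReal_ofReal (by linarith), ENNReal.toReal_ofReal h0]

lemma isProbabilityMeasure_mixture [IsProbabilityMeasure P] [IsProbabilityMeasure Q]
    (h0 : 0 ≤ w) (h1 : w ≤ 1) : IsProbabilityMeasure (mixture w P Q) := by
  refine ⟨?_⟩
  simp only [mixture, Measure.add_apply, Measure.smul_apply, smul_eq_mul, measure_univ, mul_one]
  rw [← ENNReal.ofReal_add (by linarith) h0]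
  simp

lemma integrable_mixture {f : α → ℝ} (hP : Integrable f P) (hQ : Integrable f Q) :
    Integrable f (mixture w P Q) :=
  (hP.smul_measure ENNReal.ofReal_ne_top).add_measure (hQ.smul_measure ENNReal.ofReal_ne_top)

lemma integral_mixture {f : α → ℝ} (h0 : 0 ≤ w) (h1 : w ≤ 1) (hP : Integrable f P)
    (hQ : Integrable f Q) :
    ∫ x, f x ∂(mixture w P Q) = (1 - w) * ∫ x, f x ∂P + w * ∫ x, f x ∂Q := by
  rw [mixture, integral_add_measure (hP.smul_measure ENNReal.ofReal_ne_top)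
    (hQ.smul_measure ENNReal.ofReal_ne_top), integral_smul_measure, integral_smul_measure,
    ENNReal.toReal_ofReal (by linarith), ENNReal.toReal_ofReal h0, smul_eq_mul, smul_eq_mul]

lemma tvDist_mixture_le [IsProbabilityMeasure P] [IsProbabilityMeasure Q]
    (h0 : 0 ≤ w) (h1 : w ≤ 1) : tvDist P (mixture w P Q) ≤ w := by
  refine Real.iSup_le (fun A => ?_) h0
  have hP : (P A.1).toReal ≤ 1 := measureReal_le_one
  have hQ : (Q A.1).toReal ≤ 1 := measureReal_le_one
  have hP0 : 0 ≤ (P A.1).toReal := ENNReal.toReal_nonneg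
  have hQ0 : 0 ≤ (Q A.1).toReal := ENNReal.toReal_nonneg
  rw [mixture_apply_toReal h0 h1, abs_le]
  constructor <;> nlinarith

end Mixture

lemma integrable_sub_sq_gaussianReal (c : ℝ) :
    Integrable (fun x => (x - c) ^ 2) (gaussianReal 0 1) :=
  ((memLp_id_gaussianReal 2).sub (memLp_const c)).integrable_sq

lemma integral_sub_sq_gaussianReal (c : ℝ) :
    ∫ x, (x - c) ^ 2 ∂(gaussianReal 0 1) = 1 + c ^ 2 := by
  have h := variance_eq_sub ((memLp_id_gaussianReal (μ := 0) (v := 1) 2).sub (memLp_const c))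
  have hid : Integrable (fun x : ℝ => x) (gaussianReal 0 1) :=
    (memLp_id_gaussianReal 1).integrable le_rfl
  have hv : Var[id - fun _ => c; gaussianReal 0 1] = 1 := by
    have := variance_sub_const (X := (id : ℝ → ℝ)) (μ := gaussianReal 0 1)
      aestronglyMeasurable_id c
    rw [variance_id_gaussianReal] at this
    exact_mod_cast this
  have hm : ∫ x, (x - c) ∂(gaussianReal 0 1) = -c := by
    rw [integral_sub hid (integrable_const c), integral_id_gaussianReal]
    simp
  rw [hv] at h
  simp only [Pi.pow_apply, Pi.sub_apply, id_eq, hm] at h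
  linarith

/-- Lemma E.1 of the paper: for `ε ∈ (1/4, 1/2)` there is a distribution `D2` on `ℝ` with
`d_TV(N(0,1), D2) ≤ 2ε`, variance at most `1 + 3(1 − 2ε)`, and mean at least
`(1 − 2ε)^(−1/2)`. -/
theorem lower_bound_gaussian_vs_bounded_covariance_large_eps
    (ε : ℝ) (hε0 : 1 / 4 < ε) (hε : ε < 1 / 2) :
    ∃ D2 : Measure ℝ, IsProbabilityMeasure D2 ∧
      tvDist (gaussianReal 0 1) D2 ≤ 2 * ε ∧
      Integrable (id : ℝ → ℝ) D2 ∧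
      Integrable (fun x => (x - ∫ y, y ∂D2) ^ 2) D2 ∧
      (∫ x, (x - ∫ y, y ∂D2) ^ 2 ∂D2) ≤ 1 + 3 * (1 - 2 * ε) ∧
      (1 - 2 * ε) ^ (-(1 / 2 : ℝ)) ≤ ∫ y, y ∂D2 := by
  have hp : 0 < 1 - 2 * ε := by linarith
  have h0 : 0 ≤ 2 * ε := by linarith
  have h1 : 2 * ε ≤ 1 := by linarith
  set m : ℝ := (1 - 2 * ε) ^ (-(1 / 2 : ℝ)) with hm
  have hm2 : (1 - 2 * ε) * m ^ 2 = 1 := by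
    rw [hm, ← Real.rpow_natCast, ← Real.rpow_mul hp.le]
    norm_num
    rw [Real.rpow_neg_one, mul_inv_cancel₀ hp.ne']
  set a : ℝ := m / (2 * ε) with ha
  have hwa : 2 * ε * a = m := by rw [ha]; field_simp
  have hid : Integrable (fun x : ℝ => x) (gaussianReal 0 1) :=
    (memLp_id_gaussianReal 1).integrable le_rfl
  have hid' : Integrable (fun x : ℝ => x) (Measure.dirac a) := integrable_dirac (by simp)
  have hsq : Integrable (fun x : ℝ => (x - m) ^ 2) (Measure.dirac a) := integrable_dirac (by simp)
  have hmean : ∫ y, y ∂(mixture (2 * ε) (gaussianReal 0 1) (Measure.dirac a)) = m := by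
    rw [integral_mixture h0 h1 hid hid', integral_id_gaussianReal, integral_dirac, hwa]
    simp
  refine ⟨mixture (2 * ε) (gaussianReal 0 1) (Measure.dirac a),
    isProbabilityMeasure_mixture h0 h1, tvDist_mixture_le h0 h1, integrable_mixture hid hid', ?_⟩
  rw [hmean]
  refine ⟨integrable_mixture (integrable_sub_sq_gaussianReal m) hsq, ?_, le_rfl⟩
  rw [integral_mixture h0 h1 (integrable_sub_sq_gaussianReal m) hsq, integral_sub_sq_gaussianReal,
    integral_dirac]
  have hvar : (1 - 2 * ε) * (1 + m ^ 2) + 2 * ε * (a - m) ^ 2 = (1 - 2 * ε) + 1 / (2 * ε) := by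
    have ham : a - m = (1 - 2 * ε) * a := by linear_combination hwa
    have ha2 : (1 - 2 * ε) * a ^ 2 = 1 / (2 * ε) ^ 2 := by
      rw [ha, div_pow, ← mul_div_assoc, hm2]
    rw [ham]
    calc _ = (1 - 2 * ε) + (1 - 2 * ε) * m ^ 2
          + 2 * ε * (1 - 2 * ε) * ((1 - 2 * ε) * a ^ 2) := by ring
      _ = _ := by rw [hm2, ha2]; field_simp; ring
  rw [hvar]
  have : 1 / (2 * ε) ≤ 1 + 2 * (1 - 2 * ε) := by
    rw [div_le_iff₀ (by linarith)]
    nlinarith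
  linarith
end
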